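/- Let X be a proper metric space and let Γ be a group acting geometrically on X. Let ζ_1, …, ζ_k ∈ Γ be free generators of a free abelian subgroup Λ of Γ, and let C = ⋂_{i≤k} C_Γ(ζ_i). Assume that Min_X(Λ) = ⋂_{i≤k} Min_X(ζ_i) is nonempty. Then C acts cocompactly on Min_X(Λ): there exists a compact set K ⊆ X such that every x ∈ Min_X(Λ) can be written as x = γ•y with γ ∈ C and y ∈ K ∩ Min_X(Λ). (Paper: Corollary 2, cocompactness part.) -/

import Mathlib

/-!
Let `K` be a compact set whose translates cover `X`. If `γ` moves a point `x ∈ Min_X(Λ)` into `K`,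
then `γ * ζ i * γ⁻¹` moves the point `γ • x` of `K` by exactly the translation length of `ζ i`.
Properness of `X` and proper discontinuity leave only finitely many possibilities for the tuple
`(γ * ζ i * γ⁻¹)ᵢ`, and two such `γ` with the same tuple lie in the same left coset of the common
centralizer `C`. So `C` together with finitely many `γ` suffices to bring `Min_X(Λ)` into `K`.
-/

open Set

section Centralizer

variable {G : Type*} [Group G]

theorem mem_centralizer_range_iff {ι : Type*} {ζ : ι → G} {g : G} :
    g ∈ Subgroup.centralizer (range ζ) ↔ ∀ i, Commute g (ζ i) := by
  simp only [Subgroup.mem_centralizer_iff, forall_mem_range, commute_iff_eq, eq_comm]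

theorem inv_mul_mem_centralizer_range_of_conj_eq {ι : Type*} {ζ : ι → G} {g h : G}
    (hgh : ∀ i, g * ζ i * g⁻¹ = h * ζ i * h⁻¹) :
    g⁻¹ * h ∈ Subgroup.centralizer (range ζ) := by
  refine mem_centralizer_range_iff.2 fun i ↦ ?_
  calc g⁻¹ * h * ζ i = g⁻¹ * (h * ζ i * h⁻¹) * h := by group
    _ = g⁻¹ * (g * ζ i * g⁻¹) * h := by rw [hgh]
    _ = ζ i * (g⁻¹ * h) := by group

theorem exists_finite_forall_inv_mul_mem_centralizer {ι : Type*} [Finite ι] {ζ : ι → G}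
    {A : Set G} (hA : ∀ i, ((fun g ↦ g * ζ i * g⁻¹) '' A).Finite) :
    ∃ F : Set G, F.Finite ∧ ∀ g ∈ A, ∃ f ∈ F, f⁻¹ * g ∈ Subgroup.centralizer (range ζ) := by
  let conjTuple : G → ι → G := fun g i ↦ g * ζ i * g⁻¹
  have finite_image : (conjTuple '' A).Finite :=
    (Finite.pi' hA).subset <| image_subset_iff.2 fun g hg _ ↦ mem_image_of_mem _ hg
  obtain ⟨F, -, hF⟩ := exists_subset_bijOn A conjTuple
  refine ⟨F, hF.finite_iff_finite.2 finite_image, fun g hg ↦ ?_⟩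
  obtain ⟨f, hfF, hfg⟩ := hF.surjOn (mem_image_of_mem conjTuple hg)
  exact ⟨f, hfF, inv_mul_mem_centralizer_range_of_conj_eq (congrFun hfg)⟩

end Centralizer

theorem properlyDiscontinuousSMul_of_finite_image_inter_self {X : Type*} [TopologicalSpace X]
    {Γ : Type*} [SMul Γ X]
    (h : ∀ K : Set X, IsCompact K → {γ : Γ | ((γ • ·) '' K ∩ K).Nonempty}.Finite) :
    ProperlyDiscontinuousSMul Γ X where
  finite_disjoint_inter_image {K L} hK hL :=
    (h (K ∪ L) (hK.union hL)).subset fun _ hγ ↦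
      hγ.mono (inter_subset_inter (image_mono subset_union_left) subset_union_right)

section Displacement

variable {X : Type*} [PseudoMetricSpace X] {Γ : Type*} [SMul Γ X]

/-- The displacement function `δ_γ` of a group element `γ`. -/
def displacement (γ : Γ) (x : X) : ℝ := dist (γ • x) x

variable (X) in
/-- The translation length `|γ|_X`. -/
noncomputable def translationLength (γ : Γ) : ℝ := ⨅ x : X, displacement γ x

variable (X) in
/-- The minimal displacement set `Min_X(γ)`; it is empty when the infimum defining the translation
length is not attained. -/
def minSet (γ : Γ) : Set X := {x | displacement γ x = translationLength X γ}

theorem finite_setOf_exists_displacement_le [ProperSpace X] [ProperlyDiscontinuousSMul Γ X]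
    {K : Set X} (hK : IsCompact K) (r : ℝ) :
    {γ : Γ | ∃ x ∈ K, displacement γ x ≤ r}.Finite := by
  refine (ProperlyDiscontinuousSMul.finite_disjoint_inter_image hK
    (hK.cthickening (r := r))).subset ?_
  rintro γ ⟨x, hx, hr⟩
  exact ⟨γ • x, mem_image_of_mem _ hx, Metric.mem_cthickening_of_dist_le _ x _ _ hx hr⟩

end Displacement

section IsometricAction

variable {X : Type*} [PseudoMetricSpace X] {Γ : Type*} [Group Γ] [MulAction Γ X]
  [IsIsometricSMul Γ X]

theorem displacement_conj_smul (γ ζ : Γ) (x : X) :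
    displacement (γ * ζ * γ⁻¹) (γ • x) = displacement ζ x := by
  simp [displacement, mul_smul]

theorem displacement_smul_of_commute {γ ζ : Γ} (h : Commute γ ζ) (x : X) :
    displacement ζ (γ • x) = displacement ζ x := by
  rw [← displacement_conj_smul γ ζ x, h.mul_inv_cancel]

theorem smul_mem_minSet_of_commute {γ ζ : Γ} (h : Commute γ ζ) {x : X} (hx : x ∈ minSet X ζ) :
    γ • x ∈ minSet X ζ :=
  (displacement_smul_of_commute h x).trans hx

theorem finite_image_conj_of_displacement_le [ProperSpace X] [ProperlyDiscontinuousSMul Γ X]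
    {K S : Set X} (hK : IsCompact K) {ζ : Γ} {r : ℝ} (hr : ∀ x ∈ S, displacement ζ x ≤ r) :
    ((fun γ : Γ ↦ γ * ζ * γ⁻¹) '' {γ | ∃ x ∈ S, γ • x ∈ K}).Finite := by
  refine (finite_setOf_exists_displacement_le hK r).subset ?_
  rintro _ ⟨γ, ⟨x, hxS, hxK⟩, rfl⟩
  exact ⟨γ • x, hxK, (displacement_conj_smul γ ζ x).trans_le (hr x hxS)⟩

end IsometricAction

section Cocompact

/-- The subgroup `H` acts cocompactly on the set `S`: the `H`-translates of `K ∩ S` cover `S` for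
some compact `K`. Invariance of `S` under `H` is not part of the definition. -/
def ActsCocompactlyOn {X : Type*} [TopologicalSpace X] {Γ : Type*} [Group Γ] [MulAction Γ X]
    (H : Subgroup Γ) (S : Set X) : Prop :=
  ∃ K : Set X, IsCompact K ∧ ∀ x ∈ S, ∃ γ ∈ H, ∃ y ∈ K ∩ S, x = γ • y

theorem actsCocompactlyOn_of_finite_cosets {X : Type*} [TopologicalSpace X] {Γ : Type*} [Group Γ]
    [MulAction Γ X] [ContinuousConstSMul Γ X] {H : Subgroup Γ} {S K : Set X} {F : Set Γ}
    (hS : ∀ γ ∈ H, ∀ x ∈ S, γ • x ∈ S) (hK : IsCompact K) (hF : F.Finite)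
    (hcov : ∀ x ∈ S, ∃ γ : Γ, γ • x ∈ K ∧ ∃ f ∈ F, f⁻¹ * γ ∈ H) :
    ActsCocompactlyOn H S := by
  refine ⟨⋃ f ∈ F, (f⁻¹ • ·) '' K,
    hF.isCompact_biUnion fun f _ ↦ hK.image (continuous_const_smul f⁻¹), fun x hx ↦ ?_⟩
  obtain ⟨γ, hγK, f, hf, hfγ⟩ := hcov x hx
  refine ⟨(f⁻¹ * γ)⁻¹, H.inv_mem hfγ, (f⁻¹ * γ) • x, ⟨?_, hS _ hfγ x hx⟩,
    (inv_smul_smul _ x).symm⟩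
  exact mem_biUnion hf ⟨γ • x, hγK, (mul_smul f⁻¹ γ x).symm⟩

variable {X : Type*} [PseudoMetricSpace X] [ProperSpace X]
  {Γ : Type*} [Group Γ] [MulAction Γ X] [IsIsometricSMul Γ X] [ProperlyDiscontinuousSMul Γ X]
  {ι : Type*} [Finite ι]

theorem actsCocompactlyOn_centralizer_of_displacement_le {ζ : ι → Γ} {S K : Set X} {r : ι → ℝ}
    (hS : ∀ γ ∈ Subgroup.centralizer (range ζ), ∀ x ∈ S, γ • x ∈ S)
    (hr : ∀ i, ∀ x ∈ S, displacement (ζ i) x ≤ r i)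
    (hK : IsCompact K) (hcov : ∀ x ∈ S, ∃ γ : Γ, γ • x ∈ K) :
    ActsCocompactlyOn (Subgroup.centralizer (range ζ)) S := by
  obtain ⟨F, hF, hFcov⟩ := exists_finite_forall_inv_mul_mem_centralizer fun i ↦
    finite_image_conj_of_displacement_le hK (hr i)
  refine actsCocompactlyOn_of_finite_cosets hS hK hF fun x hx ↦ ?_
  obtain ⟨γ, hγ⟩ := hcov x hx
  exact ⟨γ, hγ, hFcov γ ⟨x, hx, hγ⟩⟩

theorem corollary2_centralizer_acts_cocompactly_on_Min_general
    (cocpt : ∃ K : Set X, IsCompact K ∧ ∀ x : X, ∃ γ : Γ, γ • x ∈ K) (ζ : ι → Γ) :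
    ActsCocompactlyOn (Subgroup.centralizer (range ζ)) (⋂ i, minSet X (ζ i)) := by
  obtain ⟨K, hK, hcov⟩ := cocpt
  refine actsCocompactlyOn_centralizer_of_displacement_le
    (fun γ hγ x hx ↦ mem_iInter.2 fun i ↦ ?_)
    (fun i x hx ↦ (mem_iInter.1 hx i).le) hK (fun x _ ↦ hcov x)
  exact smul_mem_minSet_of_commute (mem_centralizer_range_iff.1 hγ i) (mem_iInter.1 hx i)

end Cocompact

/-- **Corollary 2 (cocompactness part).** Let `X` be a proper metric space with a
geometric action of `Γ`. Let `ζ 1, …, ζ k` be free generators of a free abelian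
subgroup of `Γ` and `C` their common centralizer. If `Min_X(Λ) = ⋂ i, Min_X(ζ i)`
is nonempty, then `C` acts cocompactly on it. -/
theorem corollary2_centralizer_acts_cocompactly_on_Min
    {X : Type*} [MetricSpace X] [ProperSpace X]
    {Γ : Type*} [Group Γ] [MulAction Γ X]
    -- Γ acts by isometries
    (isom : ∀ (γ : Γ) (x y : X), dist (γ • x) (γ • y) = dist x y)
    -- Γ acts properly discontinuously
    (propdisc : ∀ K : Set X, IsCompact K →
      {γ : Γ | ((fun x => γ • x) '' K ∩ K).Nonempty}.Finite)
    -- Γ acts cocompactly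
    (cocpt : ∃ K : Set X, IsCompact K ∧ ∀ x : X, ∃ γ : Γ, γ • x ∈ K)
    -- ζ 1, …, ζ k are free generators of a free abelian subgroup of Γ
    {k : ℕ} (ζ : Fin k → Γ)
    (φ : Multiplicative (Fin k → ℤ) →* Γ)
    (hφinj : Function.Injective φ)
    (hφζ : ∀ i : Fin k, φ (Multiplicative.ofAdd (Pi.single i 1)) = ζ i)
    -- the minimal displacement set of Λ
    (MinΛ : Set X)
    (hMin : MinΛ = ⋂ i : Fin k,
      {x : X | dist (ζ i • x) x = ⨅ y : X, dist (ζ i • y) y})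
    (hne : MinΛ.Nonempty) :
    ∃ K : Set X, IsCompact K ∧
      ∀ x ∈ MinΛ,
        ∃ γ : Γ, (∀ i : Fin k, Commute γ (ζ i)) ∧
          ∃ y ∈ K ∩ MinΛ, x = γ • y := by
  have : IsIsometricSMul Γ X := ⟨fun γ ↦ .of_dist_eq (isom γ)⟩
  have := properlyDiscontinuousSMul_of_finite_image_inter_self propdisc
  simpa only [hMin, ActsCocompactlyOn, mem_centralizer_range_iff, minSet, displacement,
    translationLength] using
    corollary2_centralizer_acts_cocompactly_on_Min_general cocpt ζ
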